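/- arXiv:1706.08508 — 2 statements merged into one kernel-verified Lean document; each statement's English description precedes it below -/
import Mathlib

section
/- Let q be a real number that is transcendental over ℚ, let F = ℚ(q) ⊆ ℝ, and let α be a real number with 2α³ + 3α² − 4q²·α − 1 = 0. Then the degree [F(α) : F] is not a power of 2. -/
/-!
Since `q` is transcendental over `K`, the substitution `X ↦ q` identifies `K(X)` with `K(q)`. A root
in `K(X)` of a polynomial over `K[X]` whose leading and constant coefficients are units is integral
over `K[X]` and divides the constant coefficient, so it is a nonzero constant `c`. For the cubic
`a x³ + b x² + f x + d` with `a, b, d ∈ K` this would give `c f ∈ K`, which is impossible when `f`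
is not constant. So the cubic is irreducible, and its roots have degree `3` over `K(q)`.
-/

open Polynomial IntermediateField

theorem exists_unit_algebraMap_eq_of_aeval_eq_zero {A F : Type*} [CommRing A] [IsDomain A]
    [IsIntegrallyClosed A] [Field F] [Algebra A F] [IsFractionRing A F] {p : A[X]}
    (hlead : IsUnit p.leadingCoeff) (hconst : IsUnit (p.coeff 0)) {x : F} (hx : aeval x p = 0) :
    ∃ u : Aˣ, algebraMap A F u = x := by
  have hint : IsIntegral A x := by
    simpa [smul_smul] using (isIntegral_leadingCoeff_smul p x hx).smul (↑hlead.unit⁻¹ : A)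
  obtain ⟨y, rfl⟩ := IsIntegrallyClosed.algebraMap_eq_of_integral hint
  have hroot : p.IsRoot y := by
    rwa [aeval_algebraMap_apply_eq_algebraMap_eval,
      FaithfulSMul.algebraMap_eq_zero_iff] at hx
  exact ⟨(isUnit_of_dvd_unit hroot.dvd_coeff_zero hconst).unit, rfl⟩

theorem finrank_adjoin_simple_of_irreducible {F E : Type*} [Field F] [Field E] [Algebra F E]
    {p : F[X]} (hp : Irreducible p) {x : E} (hx : aeval x p = 0) :
    Module.finrank F F⟮x⟯ = p.natDegree := by
  have hint : IsIntegral F x := IsAlgebraic.isIntegral ⟨p, hp.ne_zero, hx⟩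
  rw [adjoin.finrank hint, ← minpoly.eq_of_irreducible hp hx,
    natDegree_mul_leadingCoeff_inv p hp.ne_zero]

section CubicWithNonconstantLinearCoefficient

variable {K : Type*} [Field K] {a d : K} (b : K) {f : K[X]}

theorem aeval_cubic_ne_zero_of_nonconstant (ha : a ≠ 0) (hd : d ≠ 0) (hf : f.natDegree ≠ 0)
    {F : Type*} [Field F] [Algebra K[X] F] [IsFractionRing K[X] F] (x : F) :
    aeval x (Cubic.toPoly ⟨C a, C b, f, C d⟩) ≠ 0 := by
  intro hx
  have hlead : IsUnit (Cubic.toPoly ⟨C a, C b, f, C d⟩).leadingCoeff := by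
    rw [Cubic.leadingCoeff_of_a_ne_zero' (C_ne_zero.mpr ha)]
    exact isUnit_C.mpr ha.isUnit
  have hconst : IsUnit ((Cubic.toPoly ⟨C a, C b, f, C d⟩).coeff 0) := by
    rw [Cubic.coeff_eq_d]
    exact isUnit_C.mpr hd.isUnit
  obtain ⟨u, rfl⟩ := exists_unit_algebraMap_eq_of_aeval_eq_zero hlead hconst hx
  obtain ⟨c, hc, hcu⟩ := isUnit_iff.mp u.isUnit
  have hroot : C a * C c ^ 3 + C b * C c ^ 2 + f * C c + C d = 0 := by
    rw [aeval_algebraMap_apply_eq_algebraMap_eval, FaithfulSMul.algebraMap_eq_zero_iff,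
      ← hcu] at hx
    simpa [Cubic.toPoly] using hx
  have hfc : f * C c = C (-(a * c ^ 3 + b * c ^ 2 + d)) := by
    simp only [map_neg, map_add, map_mul, map_pow]
    linear_combination hroot
  apply hf
  rw [← natDegree_mul_C hc.ne_zero, hfc, natDegree_C]

theorem irreducible_map_cubic_of_nonconstant (ha : a ≠ 0) (hd : d ≠ 0) (hf : f.natDegree ≠ 0)
    (F : Type*) [Field F] [Algebra K[X] F] [IsFractionRing K[X] F] :
    Irreducible ((Cubic.toPoly ⟨C a, C b, f, C d⟩).map (algebraMap K[X] F)) := by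
  refine irreducible_of_degree_le_three_of_not_isRoot ?_ fun x hx ↦
    aeval_cubic_ne_zero_of_nonconstant b ha hd hf x ?_
  · rw [natDegree_map_eq_of_injective (FaithfulSMul.algebraMap_injective K[X] F),
      Cubic.natDegree_of_a_ne_zero' (C_ne_zero.mpr ha)]
    decide
  · rwa [IsRoot.def, eval_map_algebraMap] at hx

variable {L : Type*} [Field L] [Algebra K L] {q : L}

theorem irreducible_cubic_adjoin_transcendental (hq : Transcendental K q) (ha : a ≠ 0)
    (hd : d ≠ 0) (hf : f.natDegree ≠ 0) :
    Irreducible (Cubic.toPoly ⟨algebraMap K K⟮q⟯ a, algebraMap K K⟮q⟯ b,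
      aeval (AdjoinSimple.gen K q) f, algebraMap K K⟮q⟯ d⟩) := by
  let e := (RatFunc.algEquivOfTranscendental q hq).toRingEquiv
  convert (MulEquiv.irreducible_iff (mapEquiv e)).mpr
    (irreducible_map_cubic_of_nonconstant b ha hd hf (RatFunc K)) using 1
  simp [e, Cubic.toPoly, -RatFunc.algebraMap_C]

variable {b} in
theorem stmt_9_general (hq : Transcendental K q) (ha : a ≠ 0) (hd : d ≠ 0)
    (hf : f.natDegree ≠ 0) {α : L}
    (hα : algebraMap K L a * α ^ 3 + algebraMap K L b * α ^ 2 + aeval q f * α +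
      algebraMap K L d = 0) :
    Module.finrank K⟮q⟯ K⟮q⟯⟮α⟯ = 3 := by
  rw [finrank_adjoin_simple_of_irreducible
    (irreducible_cubic_adjoin_transcendental b hq ha hd hf)]
  · exact Cubic.natDegree_of_a_ne_zero' (by simpa using ha)
  · simpa [Cubic.toPoly, ← aeval_algebraMap_apply, ← IsScalarTower.algebraMap_apply] using hα

end CubicWithNonconstantLinearCoefficient

open IntermediateField in
theorem stmt_9 (q α : ℝ) (hq : Transcendental ℚ q)
    (hα : 2 * α ^ 3 + 3 * α ^ 2 - 4 * q ^ 2 * α - 1 = 0) :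
    ¬ ∃ n : ℕ, Module.finrank ℚ⟮q⟯ (IntermediateField.adjoin ℚ⟮q⟯ {α}) = 2 ^ n := by
  rw [stmt_9_general (a := 2) (b := 3) (d := -1) (f := C (-4) * X ^ 2) hq two_ne_zero
    (by norm_num) (by simp) (by simpa [sub_eq_add_neg] using hα)]
  exact fun ⟨n, hn⟩ ↦ by cases n <;> omega
end

section
/- Let q be a real number that is transcendental over ℚ. Let A, B, C be three non-collinear points in the Euclidean plane with dist(A,B) = dist(A,C) = l and dist(B,C) = b, such that dist(A,M) = q where M is the midpoint of BC, and such that dist(B,P) = 1 where P is the point on the segment from A to C with dist(C,P) = b·l/(b + l). Then the ratio l/b does not belong to any subfield Kₙ ⊆ ℝ arising as the top of a finite tower ℚ(q) = K₀ ⊆ K₁ ⊆ ⋯ ⊆ Kₙ of subfields of ℝ with [Kᵢ : Kᵢ₋₁] = 2 for every i = 1, …, n. -/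
set_option autoImplicit false
set_option synthInstance.maxHeartbeats 400000

/-!
Write `t = l / b` and let `r` be the ratio of the bisector from the apex to the one from a base
vertex. Computing both lengths shows that `t` is a root of the cubic `(2T - 1)(T + 1)² - 4r²T`.
For transcendental `r` this cubic has coefficients in the unique factorization domain `k[r]`, and
both its leading and its constant coefficient are units there. By the rational root theorem a root
in `k(r)` would be a unit of `k[r]`, hence a constant, which would make `r` algebraic. So the cubic
is irreducible, `t` has degree `3` over `k(r)`, and `t` lies in no extension whose degree is prime
to `3`.
-/

section Geometry

variable {V Pt : Type*} [NormedAddCommGroup V] [InnerProductSpace ℝ V] [MetricSpace Pt]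
  [NormedAddTorsor V Pt] {A B C P : Pt}

theorem dist_sq_mul_dist_add_dist_sq_mul_dist_of_wbtw (hP : Wbtw ℝ A P C) :
    dist B A ^ 2 * dist C P + dist B C ^ 2 * dist A P =
      dist A C * (dist B P ^ 2 + dist A P * dist C P) := by
  rcases eq_or_ne P A with rfl | hPA
  · simp [dist_comm C, mul_comm]
  rcases eq_or_ne P C with rfl | hPC
  · simp [mul_comm]
  exact EuclideanGeometry.dist_sq_mul_dist_add_dist_sq_mul_dist B A C P
    (Sbtw.angle₁₂₃_eq_pi ⟨hP, hPA, hPC⟩)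

theorem dist_sq_angleBisector_foot (hAC : A ≠ C) (hP : Wbtw ℝ A P C)
    (hCP : dist C P = dist B C * dist A C / (dist B C + dist A B)) :
    dist B P ^ 2 = dist A B * dist B C * (1 - (dist A C / (dist B C + dist A B)) ^ 2) := by
  have hAC_pos : 0 < dist A C := dist_pos.2 hAC
  have hsum_pos : 0 < dist B C + dist A B := by
    linarith [dist_triangle A B C]
  have hAP : dist A P = dist A B * dist A C / (dist B C + dist A B) := by
    have hadd := hP.dist_add_dist
    rw [dist_comm P C, hCP] at hadd
    rw [eq_sub_of_add_eq hadd]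
    field_simp
    ring
  have hstewart := dist_sq_mul_dist_add_dist_sq_mul_dist_of_wbtw (B := B) hP
  rw [hCP, hAP, dist_comm B A] at hstewart
  field_simp at hstewart ⊢
  linear_combination -hstewart

theorem four_mul_dist_midpoint_sq_of_dist_eq (h : dist A B = dist A C) :
    4 * dist A (midpoint ℝ B C) ^ 2 = (2 * dist A B) ^ 2 - dist B C ^ 2 := by
  have happollonius :=
    EuclideanGeometry.dist_sq_add_dist_sq_eq_two_mul_dist_midpoint_sq_add_half_dist_sq A B C
  rw [← h] at happollonius
  linear_combination -2 * happollonius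

theorem isosceles_leg_div_base_cubic {r l b : ℝ} (hBC_ne : B ≠ C) (hAB : dist A B = l)
    (hAC : dist A C = l) (hBC : dist B C = b) (hAM : dist A (midpoint ℝ B C) = r * dist B P)
    (hP : Wbtw ℝ A P C) (hCP : dist C P = b * l / (b + l)) :
    (2 * (l / b) - 1) * (l / b + 1) ^ 2 = 4 * r ^ 2 * (l / b) := by
  have hb : 0 < b := hBC ▸ dist_pos.2 hBC_ne
  have hl : 0 < l := by
    linarith [dist_triangle_left B C A]
  have hmedian : 4 * (r * dist B P) ^ 2 = (2 * l) ^ 2 - b ^ 2 := by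
    rw [← hAM, four_mul_dist_midpoint_sq_of_dist_eq (hAB.trans hAC.symm), hAB, hBC]
  have hfoot : dist B P ^ 2 = l * b ^ 2 * (2 * l + b) / (b + l) ^ 2 := by
    rw [dist_sq_angleBisector_foot (dist_pos.1 (hAC ▸ hl)) hP (by rw [hCP, hBC, hAC, hAB]),
      hAB, hAC, hBC]
    field_simp
    ring
  have hBP : dist B P ^ 2 ≠ 0 := by
    rw [hfoot]
    positivity
  refine mul_right_cancel₀ hBP ?_
  calc (2 * (l / b) - 1) * (l / b + 1) ^ 2 * dist B P ^ 2
      = ((2 * l) ^ 2 - b ^ 2) * (l / b) := by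
        rw [hfoot]
        field_simp
        ring
    _ = 4 * r ^ 2 * (l / b) * dist B P ^ 2 := by
        rw [← hmedian]
        ring

end Geometry

section RationalRoot

open Polynomial

theorem exists_isUnit_algebraMap_eq_of_aeval_eq_zero {A K : Type*} [CommRing A] [IsDomain A]
    [UniqueFactorizationMonoid A] [Field K] [Algebra A K] [IsFractionRing A K] {f : A[X]}
    (hlead : IsUnit f.leadingCoeff) (hconst : IsUnit (f.coeff 0)) {x : K}
    (hx : aeval x f = 0) : ∃ u : A, IsUnit u ∧ algebraMap A K u = x := by
  have hnum : IsUnit (IsFractionRing.num A x) := isUnit_of_dvd_unit (num_dvd_of_is_root hx) hconst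
  have hden : IsUnit (IsFractionRing.den A x : A) :=
    isUnit_of_dvd_unit (den_dvd_of_is_root hx) hlead
  obtain ⟨d, hd⟩ := hden
  refine ⟨IsFractionRing.num A x * ↑d⁻¹, hnum.mul d⁻¹.isUnit, ?_⟩
  rw [map_mul, map_units_inv, hd, ← div_eq_mul_inv, IsFractionRing.mk'_num_den']

theorem natDegree_dvd_finrank_of_irreducible_of_aeval_eq_zero {F E : Type*} [Field F] [Field E]
    [Algebra F E] {f : F[X]} (hf : Irreducible f) {x : E} (hx : aeval x f = 0) :
    f.natDegree ∣ Module.finrank F E := by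
  have hx_int : IsIntegral F x := isAlgebraic_iff_isIntegral.1 ⟨f, hf.ne_zero, hx⟩
  rw [minpoly.Irreducible.eq_minpoly hf hx, natDegree_C_mul (leadingCoeff_ne_zero.2 hf.ne_zero)]
  exact minpoly.degree_dvd hx_int

theorem natDegree_dvd_relfinrank_of_irreducible_of_aeval_eq_zero {L : Type*} [Field L]
    {F E : Subfield L} (h : F ≤ E) {f : F[X]} (hf : Irreducible f) {x : L} (hxE : x ∈ E)
    (hx : aeval x f = 0) : f.natDegree ∣ F.relfinrank E := by
  rw [Subfield.relfinrank_eq_finrank_of_le h]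
  let y : Subfield.extendScalars h := ⟨x, hxE⟩
  refine natDegree_dvd_finrank_of_irreducible_of_aeval_eq_zero hf (x := y) ?_
  exact (aeval_algebraMap_eq_zero_iff L y f).1 hx

end RationalRoot

section Cubic

open Polynomial

/-- The cubic `(2T - 1)(T + 1)² - 4r²T`, one of whose roots is the leg-to-base ratio of an isosceles
triangle in which the bisector from the apex is `r` times the bisector from a base vertex. -/
def bisectorCubic {R : Type*} [CommRing R] (r : R) : Cubic R :=
  ⟨2, 3, -4 * r ^ 2, -1⟩

theorem aeval_bisectorCubic {R S : Type*} [CommRing R] [CommRing S] [Algebra R S] (r : R) (x : S) :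
    aeval x (bisectorCubic r).toPoly =
      (2 * x - 1) * (x + 1) ^ 2 - 4 * algebraMap R S r ^ 2 * x := by
  simp only [bisectorCubic, Cubic.toPoly, map_add, map_mul, map_pow, map_neg, map_ofNat, map_one,
    aeval_X, aeval_C]
  ring

theorem map_bisectorCubic {R S : Type*} [CommRing R] [CommRing S] (φ : R →+* S) (r : R) :
    (bisectorCubic r).map φ = bisectorCubic (φ r) := by
  simp only [bisectorCubic, Cubic.map, map_mul, map_pow, map_neg, map_ofNat, map_one]

theorem natDegree_bisectorCubic {R : Type*} [CommRing R] (h2 : (2 : R) ≠ 0) (r : R) :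
    (bisectorCubic r).toPoly.natDegree = 3 :=
  Cubic.natDegree_of_a_ne_zero h2

variable {k : Type*} [Field k]

theorem two_ne_zero_of_algebra {R : Type*} [CommRing R] [Nontrivial R] [Algebra k R]
    (h2 : (2 : k) ≠ 0) : (2 : R) ≠ 0 := by
  simpa only [map_ofNat] using (_root_.map_ne_zero (algebraMap k R)).2 h2

theorem bisectorCubic_X_eval_C_ne_zero (h2 : (2 : k) ≠ 0) (c : k) :
    (bisectorCubic (X : k[X])).toPoly.eval (C c) ≠ 0 := by
  intro h
  rw [← coe_aeval_eq_eval, aeval_bisectorCubic, Algebra.algebraMap_self_apply] at h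
  have heval_zero : (2 * c - 1) * (c + 1) ^ 2 = 0 := by
    simpa using congrArg (eval 0) h
  have heval_one : (2 * c - 1) * (c + 1) ^ 2 - 4 * c = 0 := by
    simpa using congrArg (eval 1) h
  have h4 : (4 : k) ≠ 0 := by
    convert mul_ne_zero h2 h2
    norm_num
  have hc : c = 0 := (mul_eq_zero.1 (by linear_combination heval_zero - heval_one)).resolve_left h4
  simp [hc] at heval_zero

theorem aeval_bisectorCubic_X_ne_zero (h2 : (2 : k) ≠ 0) (x : RatFunc k) :
    aeval x (bisectorCubic (X : k[X])).toPoly ≠ 0 := by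
  intro hx
  have hlead : IsUnit (bisectorCubic (X : k[X])).toPoly.leadingCoeff := by
    rw [Cubic.leadingCoeff_of_a_ne_zero (two_ne_zero_of_algebra h2)]
    exact isUnit_C.2 h2.isUnit
  have hconst : IsUnit ((bisectorCubic (X : k[X])).toPoly.coeff 0) := by
    rw [Cubic.coeff_eq_d]
    exact isUnit_one.neg
  obtain ⟨u, hu, rfl⟩ := exists_isUnit_algebraMap_eq_of_aeval_eq_zero hlead hconst hx
  obtain ⟨c, -, rfl⟩ := isUnit_iff.1 hu
  rw [aeval_algebraMap_apply, FaithfulSMul.algebraMap_eq_zero_iff, coe_aeval_eq_eval] at hx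
  exact bisectorCubic_X_eval_C_ne_zero h2 c hx

theorem irreducible_bisectorCubic_X (h2 : (2 : k) ≠ 0) :
    Irreducible (bisectorCubic (RatFunc.X : RatFunc k)).toPoly := by
  refine irreducible_of_degree_le_three_of_not_isRoot ?_ fun x hx ↦
    aeval_bisectorCubic_X_ne_zero h2 x ?_
  · simp [natDegree_bisectorCubic (two_ne_zero_of_algebra h2)]
  · rw [← eval_map_algebraMap, ← Cubic.map_toPoly, map_bisectorCubic, RatFunc.algebraMap_X]
    exact hx

open IntermediateField in
theorem irreducible_bisectorCubic_gen {L : Type*} [Field L] [Algebra k L] {r : L}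
    (h2 : (2 : k) ≠ 0) (hr : Transcendental k r) :
    Irreducible (bisectorCubic (AdjoinSimple.gen k r)).toPoly := by
  let e : RatFunc k ≃ₐ[k] k⟮r⟯ := RatFunc.algEquivOfTranscendental r hr
  have he : e RatFunc.X = AdjoinSimple.gen k r :=
    Subtype.ext (RatFunc.algEquivOfTranscendental_X r hr)
  have h := (irreducible_bisectorCubic_X h2).map (mapEquiv e.toRingEquiv)
  rw [mapEquiv_apply, ← Cubic.map_toPoly, map_bisectorCubic] at h
  rw [← he]
  exact h

end Cubic

section Towers

theorem relfinrank_eq_finrank_inclusion {L : Type*} [Field L] {F E : Subfield L} (h : F ≤ E) :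
    F.relfinrank E =
      letI : Algebra F E := (Subfield.inclusion h).toAlgebra
      Module.finrank F E :=
  Subfield.relfinrank_eq_finrank_of_le h

theorem relfinrank_zero_last_eq_prod {L : Type*} [Field L] {n : ℕ} {K : Fin (n + 1) → Subfield L}
    (hK : Monotone K) :
    (K 0).relfinrank (K (Fin.last n)) = ∏ i : Fin n, (K i.castSucc).relfinrank (K i.succ) := by
  induction n with
  | zero => simp
  | succ n ih =>
    rw [Fin.prod_univ_castSucc, ← Fin.succ_last, ← Subfield.relfinrank_mul_relfinrank
      (hK (Fin.zero_le (Fin.last n).castSucc)) (hK (Fin.castSucc_le_succ _))]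
    congr 1
    exact ih (K := fun i ↦ K i.castSucc) fun i j hij ↦ hK (Fin.castSucc_le_castSucc_iff.2 hij)

end Towers

open IntermediateField Polynomial in
/-- An infinite degree is recorded by `relfinrank` as `0`, so `hdeg` excludes it. -/
theorem stmt_11_general {k V Pt : Type*} [Field k] [Algebra k ℝ] [NormedAddCommGroup V]
    [InnerProductSpace ℝ V] [MetricSpace Pt] [NormedAddTorsor V Pt] {r l b : ℝ}
    (hr : Transcendental k r) {A B C P : Pt} (hBC_ne : B ≠ C)
    (hAB : dist A B = l) (hAC : dist A C = l) (hBC : dist B C = b)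
    (hAM : dist A (midpoint ℝ B C) = r * dist B P)
    (hP : Wbtw ℝ A P C) (hCP : dist C P = b * l / (b + l))
    {E : Subfield ℝ} (hE : k⟮r⟯.toSubfield ≤ E) (hdeg : ¬ 3 ∣ k⟮r⟯.toSubfield.relfinrank E) :
    l / b ∉ E := by
  intro ht
  have : CharZero k := (algebraMap k ℝ).charZero
  have hroot : aeval (l / b) (bisectorCubic (AdjoinSimple.gen k r)).toPoly = 0 := by
    rw [aeval_bisectorCubic, AdjoinSimple.algebraMap_gen, sub_eq_zero]
    exact isosceles_leg_div_base_cubic hBC_ne hAB hAC hBC hAM hP hCP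
  have hdvd := natDegree_dvd_relfinrank_of_irreducible_of_aeval_eq_zero hE
    (irreducible_bisectorCubic_gen two_ne_zero hr) ht hroot
  rw [natDegree_bisectorCubic two_ne_zero] at hdvd
  exact hdeg hdvd

open IntermediateField in
theorem stmt_11 (q : ℝ) (hq : Transcendental ℚ q)
    (A B C P : EuclideanSpace ℝ (Fin 2)) (l b : ℝ)
    (hcol : ¬ Collinear ℝ ({A, B, C} : Set (EuclideanSpace ℝ (Fin 2))))
    (hAB : dist A B = l) (hAC : dist A C = l) (hBC : dist B C = b)
    (hAM : dist A (midpoint ℝ B C) = q)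
    (hP : P ∈ segment ℝ A C) (hCP : dist C P = b * l / (b + l))
    (hBP : dist B P = 1) :
    ¬ ∃ (n : ℕ) (K : Fin (n + 1) → Subfield ℝ)
        (hle : ∀ i : Fin n, K i.castSucc ≤ K i.succ),
      K 0 = (ℚ⟮q⟯ : IntermediateField ℚ ℝ).toSubfield ∧
      (∀ i : Fin n,
        letI : Algebra (K i.castSucc) (K i.succ) :=
          (Subfield.inclusion (hle i)).toAlgebra
        Module.finrank (K i.castSucc) (K i.succ) = 2) ∧
      l / b ∈ K (Fin.last n) := by
  rintro ⟨n, K, hle, hK₀, hquad, hmem⟩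
  have hmono : Monotone K := Fin.monotone_iff_le_succ.2 hle
  have hdeg : (K 0).relfinrank (K (Fin.last n)) = 2 ^ n := by
    simp only [relfinrank_zero_last_eq_prod hmono, relfinrank_eq_finrank_inclusion (hle _), hquad,
      Finset.prod_const, Finset.card_univ, Fintype.card_fin]
  have hthree : ¬ 3 ∣ 2 ^ n := fun h ↦ absurd (Nat.prime_three.dvd_of_dvd_pow h) (by norm_num)
  exact stmt_11_general hq (ne₂₃_of_not_collinear hcol) hAB hAC hBC (by rw [hAM, hBP, mul_one])
    (mem_segment_iff_wbtw.1 hP) hCP (hK₀ ▸ hmono (Fin.zero_le _)) (hK₀ ▸ hdeg ▸ hthree) hmem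
end
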